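/- arXiv:2203.12513 — 4 statements merged into one kernel-verified Lean document; each statement's English description precedes it below -/
import Mathlib

section
/- Let G be a group, let T : G → GL(n, ℝ) be a group homomorphism (a linear representation of G on ℝ^n), and let A be a real m×n matrix of rank m. Then the following are equivalent: (i) for every g ∈ G, ker(A T_g) = ker(A) (equivalently, the row spaces — the ranges of the transposes — of all the matrices A T_g, g ∈ G, coincide); (ii) A is G-equivariant, i.e., there exists a group homomorphism T̃ : G → GL(m, ℝ) such that A T_g = T̃_g A for every g ∈ G. -/
/-- for a linear representation `T : G → GL(n, ℝ)` and a full-rank `m × n`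
matrix `A`, all the operators `A T_g` share the nullspace of `A` if and only if `A` is a
`G`-equivariant map, i.e. `A T_g = T̃_g A` for some representation `T̃ : G → GL(m, ℝ)`. -/
theorem stmt2 {G : Type*} [Group G] (n m : ℕ)
    (T : G →* Matrix.GeneralLinearGroup (Fin n) ℝ)
    (A : Matrix (Fin m) (Fin n) ℝ) (hA : A.rank = m) :
    (∀ g : G,
        LinearMap.ker (A * ((T g : Matrix (Fin n) (Fin n) ℝ))).mulVecLin =
          LinearMap.ker A.mulVecLin) ↔
      (∃ T' : G →* Matrix.GeneralLinearGroup (Fin m) ℝ,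
        ∀ g : G,
          A * ((T g : Matrix (Fin n) (Fin n) ℝ)) =
            ((T' g : Matrix (Fin m) (Fin m) ℝ)) * A) := by
  constructor
  · intro h
    have hsurj : Function.Surjective A.mulVec := by
      have : LinearMap.range A.mulVecLin = ⊤ := by
        apply Submodule.eq_top_of_finrank_eq
        rw [Module.finrank_fin_fun]
        exact hA
      exact LinearMap.range_eq_top.mp this
    obtain ⟨B, hB⟩ := Matrix.mulVec_surjective_iff_exists_right_inverse.mp hsurj
    have key : ∀ g : G, A * (T g : Matrix (Fin n) (Fin n) ℝ) * B * A
        = A * (T g : Matrix (Fin n) (Fin n) ℝ) := by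
      intro g
      apply Matrix.ext_of_mulVec_single
      intro i
      generalize (Pi.single i 1 : Fin n → ℝ) = v
      have h1 : (B * A).mulVec v - v ∈ LinearMap.ker A.mulVecLin := by
        rw [LinearMap.mem_ker, Matrix.mulVecLin_apply, Matrix.mulVec_sub, Matrix.mulVec_mulVec,
          ← Matrix.mul_assoc, hB, Matrix.one_mul, sub_self]
      rw [← h g, LinearMap.mem_ker, Matrix.mulVecLin_apply, Matrix.mulVec_sub,
        Matrix.mulVec_mulVec, sub_eq_zero] at h1
      rw [Matrix.mul_assoc _ B A]
      exact h1
    let F : G →* Matrix (Fin m) (Fin m) ℝ :=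
      { toFun := fun g => A * (T g : Matrix (Fin n) (Fin n) ℝ) * B
        map_one' := by simp [hB]
        map_mul' := fun x y => by
          have e : A * (T x : Matrix (Fin n) (Fin n) ℝ) * B *
              (A * (T y : Matrix (Fin n) (Fin n) ℝ) * B)
              = (A * (T x : Matrix (Fin n) (Fin n) ℝ) * B * A) *
                (T y : Matrix (Fin n) (Fin n) ℝ) * B := by
            simp only [Matrix.mul_assoc]
          rw [e, key x, map_mul, Units.val_mul]
          simp only [Matrix.mul_assoc] }
    exact ⟨F.toHomUnits, fun g => (key g).symm⟩
  · rintro ⟨T', hT⟩ g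
    ext v
    rw [hT g, LinearMap.mem_ker, LinearMap.mem_ker, Matrix.mulVecLin_apply,
      Matrix.mulVecLin_apply, ← Matrix.mulVec_mulVec]
    constructor
    · intro h
      have h2 := congrArg (((T' g)⁻¹ : Matrix.GeneralLinearGroup (Fin m) ℝ) :
        Matrix (Fin m) (Fin m) ℝ).mulVec h
      rw [Matrix.mulVec_mulVec, Units.inv_mul, Matrix.one_mulVec, Matrix.mulVec_zero] at h2
      exact h2
    · intro h
      rw [h, Matrix.mulVec_zero]
end

section
/- Let N, n, m be positive integers and let T ∈ ℝ^{n×n} satisfy T^N = I_n, with T_ℂ denoting its complexification acting on ℂ^n. If m < max over ζ ∈ ℂ of dim_ℂ ker(T_ℂ − ζ·I_n), then for every real m×n matrix A there exists a nonzero u ∈ ℝ^n with A T^g u = 0 for all g ∈ {0,…,N−1}. Consequently, for every nonempty bounded X ⊆ ℝ^n the inferred set of the family {A T^g : g = 0,…,N−1} strictly contains X: the number of measurements m ≥ max_ζ dim_ℂ ker(T_ℂ − ζ·I_n) is necessary for model identification with the operators {A T^g}. -/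
open Matrix
/-- Multiplicity of the eigenvalue `ζ ∈ ℂ` of the complexification of a real matrix `T`. -/
noncomputable def eigMult {n : ℕ} (T : Matrix (Fin n) (Fin n) ℝ) (ζ : ℂ) : ℕ :=
  Module.finrank ℂ
    (LinearMap.ker ((T.map (fun x : ℝ => (x : ℂ)) - ζ • (1 : Matrix (Fin n) (Fin n) ℂ)).mulVecLin))

lemma aux_re {m n : ℕ} (B : Matrix (Fin m) (Fin n) ℝ) (w : Fin n → ℂ)
    (h : (B.map Complex.ofRealHom) *ᵥ w = 0) :
    B *ᵥ (fun i => (w i).re) = 0 ∧ B *ᵥ (fun i => (w i).im) = 0 := by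
  constructor
  · ext i
    have := congrArg Complex.re (congrFun h i)
    simpa [mulVec, dotProduct] using this
  · ext i
    have := congrArg Complex.im (congrFun h i)
    simpa [mulVec, dotProduct] using this

lemma aux_exists {N n m : ℕ} (T : Matrix (Fin n) (Fin n) ℝ)
    (hmlt : ∃ ζ : ℂ, m < eigMult T ζ) (A : Matrix (Fin m) (Fin n) ℝ) :
    ∃ u : Fin n → ℝ, u ≠ 0 ∧ ∀ g : Fin N, (A * T ^ (g : ℕ)) *ᵥ u = 0 := by
  obtain ⟨ζ, hζ⟩ := hmlt
  unfold eigMult at hζ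
  set E := LinearMap.ker ((T.map (fun x : ℝ => (x : ℂ)) -
    ζ • (1 : Matrix (Fin n) (Fin n) ℂ)).mulVecLin) with hE
  let f : E →ₗ[ℂ] (Fin m → ℂ) := (A.map Complex.ofRealHom).mulVecLin.comp E.subtype
  have hker : LinearMap.ker f ≠ ⊥ := LinearMap.ker_ne_bot_of_finrank_lt (by simpa using hζ)
  obtain ⟨w, hw, hw0⟩ := (Submodule.ne_bot_iff _).1 hker
  have hAw : (A.map Complex.ofRealHom) *ᵥ (w : Fin n → ℂ) = 0 := by simpa [f] using hw
  have hTw : (T.map Complex.ofRealHom) *ᵥ (w : Fin n → ℂ) = ζ • (w : Fin n → ℂ) := by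
    have h := LinearMap.mem_ker.1 w.2
    rw [mulVecLin_apply, sub_mulVec, smul_mulVec, one_mulVec,
      sub_eq_zero] at h
    exact h
  have hpow : ∀ g : ℕ, ((T.map Complex.ofRealHom) ^ g) *ᵥ (w : Fin n → ℂ)
      = ζ ^ g • (w : Fin n → ℂ) := by
    intro g
    induction g with
    | zero => simp
    | succ k ih => rw [pow_succ, ← mulVec_mulVec, hTw, mulVec_smul, ih, smul_smul, pow_succ']
  have hall : ∀ g : ℕ, ((A * T ^ g).map Complex.ofRealHom) *ᵥ (w : Fin n → ℂ) = 0 := by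
    intro g
    rw [Matrix.map_mul, Matrix.map_pow, ← mulVec_mulVec, hpow, mulVec_smul, hAw, smul_zero]
  by_cases hre : (fun i => ((w : Fin n → ℂ) i).re) = 0
  · refine ⟨fun i => ((w : Fin n → ℂ) i).im, ?_, fun g => (aux_re _ _ (hall g)).2⟩
    intro him
    apply hw0
    ext i
    exact Complex.ext (congrFun hre i) (congrFun him i)
  · exact ⟨_, hre, fun g => (aux_re _ _ (hall g)).1⟩

/-- if `T^N = 1` and `m` is smaller than the maximal eigenvalue multiplicity of
the complexification of `T`, then for every `m × n` matrix `A` there is a nonzero `u` with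
`A T^g u = 0` for all `g`, and consequently the inferred set of `{A T^g}` strictly contains
every nonempty bounded `X`. -/
theorem stmt4 (N n m : ℕ) (hN : 0 < N) (hn : 0 < n) (hm : 0 < m)
    (T : Matrix (Fin n) (Fin n) ℝ) (hT : T ^ N = 1)
    (hmlt : ∃ ζ : ℂ, m < eigMult T ζ) :
    ∀ A : Matrix (Fin m) (Fin n) ℝ,
      (∃ u : Fin n → ℝ, u ≠ 0 ∧ ∀ g : Fin N, (A * T ^ (g : ℕ)) *ᵥ u = 0) ∧
        ∀ X : Set (Fin n → ℝ), X.Nonempty → Bornology.IsBounded X →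
          X ⊂ {v | ∀ g : Fin N, ∃ x ∈ X, (A * T ^ (g : ℕ)) *ᵥ v = (A * T ^ (g : ℕ)) *ᵥ x} := by
  intro A
  have hex := aux_exists (N := N) T hmlt A
  refine ⟨hex, ?_⟩
  obtain ⟨u, hu, hg⟩ := hex
  rintro X ⟨x, hx⟩ hb
  refine ⟨fun v hv g => ⟨v, hv, rfl⟩, fun hsub => ?_⟩
  have hmem : ∀ t : ℝ, x + t • u ∈ X := fun t => hsub fun g =>
    ⟨x, hx, by rw [mulVec_add, mulVec_smul, hg g, smul_zero, add_zero]⟩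
  obtain ⟨C, hC⟩ := hb.exists_norm_le
  have hupos : 0 < ‖u‖ := norm_pos_iff.2 hu
  have hC0 : 0 ≤ C := (norm_nonneg _).trans (hC x hx)
  have h1 := hC _ (hmem ((2 * C + 1) / ‖u‖))
  have h2 := hC x hx
  have h3 : ‖((2 * C + 1) / ‖u‖) • u‖ = 2 * C + 1 := by
    rw [norm_smul, Real.norm_of_nonneg (by positivity)]
    field_simp
  have h4 := norm_sub_le (x + ((2 * C + 1) / ‖u‖) • u) x
  rw [add_sub_cancel_left] at h4
  linarith
end

section
/- Let S ⊆ ℝ^p be a bounded set and let G₀, G₁, …, G_t : S → ℝ^m be Lipschitz maps. For z ∈ S write Φ_z = [G₁(z), …, G_t(z)] ∈ ℝ^{m×t} for the matrix whose columns are G₁(z), …, G_t(z), and for each integer r ≥ 0 let S_r = {z ∈ S : rank(Φ_z) = r}. Assume that for every integer r ≥ 0, the set S_r is either empty or has upper box-counting dimension at most k_r for some real k_r < r. Then for (Lebesgue-)almost every α ∈ ℝ^t, there is no z ∈ S with G₀(z) + Φ_z α = 0 (writing G_α(z) = G₀(z) + Σ_{i=1}^t α_i G_i(z), the preimage G_α⁻¹(0)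 is empty for almost every α). -/
open MeasureTheory

/-- `S ⊆ ℝ^p` has upper box-counting dimension at most `k`. -/
def DimLE (p : ℕ) (S : Set (EuclideanSpace ℝ (Fin p))) (k : ℝ) : Prop :=
  ∀ δ : ℝ, 0 < δ → ∃ ε₀ ∈ Set.Ioo (0 : ℝ) 1, ∀ ε ∈ Set.Ioo (0 : ℝ) ε₀,
    ∃ C : Finset (EuclideanSpace ℝ (Fin p)),
      (C.card : ℝ) ≤ ε ^ (-(k + δ)) ∧ S ⊆ ⋃ c ∈ C, Metric.closedBall c ε

/-- Slab estimate via Fubini. -/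
theorem slab_volume {t : ℕ} (P : Fin t → Prop) [DecidablePred P]
    (f : {i // P i} → ({i // ¬ P i} → ℝ) → ℝ) (hf : ∀ i, Continuous (f i)) (ρ c : ℝ) :
    volume {α : Fin t → ℝ | (∀ i : {i // ¬ P i}, |α i| ≤ ρ) ∧
      ∀ i : {i // P i}, |α i + f i (fun j => α j)| ≤ c} ≤
    ENNReal.ofReal (2 * c) ^ (Fintype.card {i // P i}) *
      ENNReal.ofReal (2 * ρ) ^ (Fintype.card {i // ¬ P i}) := by
  let A : Set (({i // P i} → ℝ) × ({i // ¬ P i} → ℝ)) :=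
    {q | (∀ i, |q.2 i| ≤ ρ) ∧ ∀ i, |q.1 i + f i q.2| ≤ c}
  have hA : MeasurableSet A := by
    apply IsClosed.measurableSet
    have h1 : IsClosed {q : ({i // P i} → ℝ) × ({i // ¬ P i} → ℝ) | ∀ i, |q.2 i| ≤ ρ} := by
      simp only [Set.ofPred_forall]
      exact isClosed_iInter fun i => isClosed_le (by fun_prop) continuous_const
    have h2 : IsClosed {q : ({i // P i} → ℝ) × ({i // ¬ P i} → ℝ) |
        ∀ i, |q.1 i + f i q.2| ≤ c} := by
      simp only [Set.ofPred_forall]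
      refine isClosed_iInter fun i => isClosed_le ?_ continuous_const
      have := hf i
      fun_prop
    exact h1.inter h2
  have hmp := volume_preserving_piEquivPiSubtypeProd (fun _ : Fin t => ℝ) P
  have hset : {α : Fin t → ℝ | (∀ i : {i // ¬ P i}, |α i| ≤ ρ) ∧
      ∀ i : {i // P i}, |α i + f i (fun j => α j)| ≤ c} =
      (MeasurableEquiv.piEquivPiSubtypeProd (fun _ : Fin t => ℝ) P) ⁻¹' A := by
    rfl
  rw [hset, hmp.measure_preimage hA.nullMeasurableSet]
  have hvol : (volume : Measure (({i // P i} → ℝ) × ({i // ¬ P i} → ℝ))) =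
    (volume : Measure ({i // P i} → ℝ)).prod (volume : Measure ({i // ¬ P i} → ℝ)) := rfl
  rw [hvol, Measure.prod_apply_symm hA]
  let Q : Set ({i // ¬ P i} → ℝ) := Set.pi Set.univ fun _ => Set.Icc (-ρ) ρ
  have hQ : MeasurableSet Q := MeasurableSet.univ_pi fun _ => measurableSet_Icc
  calc ∫⁻ y, volume ((fun x => (x, y)) ⁻¹' A)
      ≤ ∫⁻ y, Q.indicator (fun _ => ENNReal.ofReal (2 * c) ^ (Fintype.card {i // P i})) y := by
        apply lintegral_mono
        intro y
        by_cases hy : y ∈ Q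
        · simp only [Set.indicator_of_mem hy]
          have : ((fun x => (x, y)) ⁻¹' A) ⊆
              Set.pi Set.univ fun i => Set.Icc (-c - f i y) (c - f i y) := by
            intro x hx i _
            have := abs_le.1 (hx.2 i)
            simp only at this
            constructor <;> linarith [this.1, this.2]
          refine (measure_mono this).trans ?_
          rw [volume_pi_pi]
          simp only [Real.volume_Icc]
          have h2 : ∀ i, c - f i y - (-c - f i y) = 2 * c := fun i => by ring
          simp [h2]
        · have : ((fun x => (x, y)) ⁻¹' A) = ∅ := by
            ext x
            simp only [Set.mem_preimage, Set.mem_empty_iff_false, iff_false]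
            intro hx
            exact hy fun i _ => abs_le.1 (hx.1 i)
          simp [this]
    _ = _ := by
        rw [lintegral_indicator_const hQ]
        congr 1
        simp only [Q]
        rw [volume_pi_pi]
        have h2 : ρ - -ρ = 2 * ρ := by ring
        simp [Real.volume_Icc, h2]

theorem affine_volume {m t : ℕ} (J : Finset (Fin t)) (N : ℝ) (hN : 0 ≤ N)
    (g0 : EuclideanSpace ℝ (Fin m)) (g : Fin t → EuclideanSpace ℝ (Fin m))
    (B : Fin t → (EuclideanSpace ℝ (Fin m) →L[ℝ] ℝ)) (hB : ∀ i, ‖B i‖ ≤ N)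
    (hBg : ∀ i ∈ J, ∀ j ∈ J, B i (g j) = if i = j then 1 else 0) (ρ η : ℝ) :
    volume {α : Fin t → ℝ | (∀ i, |α i| ≤ ρ) ∧ ‖g0 + ∑ i, α i • g i‖ ≤ η} ≤
    ENNReal.ofReal (2 * (N * η)) ^ J.card * ENNReal.ofReal (2 * ρ) ^ (t - J.card) := by
  classical
  have h := slab_volume (fun i => i ∈ J)
    (fun i v => B i g0 + ∑ j : {j // ¬ j ∈ J}, v j * B i (g j)) (fun i => by fun_prop) ρ (N * η)
  have c1 : Fintype.card {i // i ∈ J} = J.card := by simp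
  have c2 : Fintype.card {i // ¬ i ∈ J} = t - J.card := by
    rw [Fintype.card_subtype_compl]; simp
  refine (measure_mono ?_).trans (h.trans (le_of_eq ?_))
  swap
  · rw [← c2, ← c1]
    congr!
  rintro α ⟨h1, h2⟩
  refine ⟨fun i => h1 i, fun i => ?_⟩
  have e : α i + (B i g0 + ∑ j : {j // ¬ j ∈ J}, α j * B i (g j)) =
      B i (g0 + ∑ i, α i • g i) := by
    rw [map_add, map_sum]
    simp only [map_smul, smul_eq_mul]
    have hsplit := Fintype.sum_subtype_add_sum_subtype (fun j => j ∈ J)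
      (fun j => α j * B i (g j))
    rw [← hsplit]
    have this (inst : Fintype {j // j ∈ J}) :
        (@Finset.univ _ inst).sum (fun j : {j // j ∈ J} => α j * B i (g j)) = α i := by
      rw [Finset.sum_eq_single i]
      · rw [hBg i i.2 i i.2]; simp
      · intro b _ hb
        rw [hBg i i.2 b b.2, if_neg (fun h => hb (Subtype.ext h.symm))]; simp
      · simp
    rw [this]; ring
  simp only
  rw [e, ← Real.norm_eq_abs]
  calc _ ≤ ‖B i‖ * ‖g0 + ∑ i, α i • g i‖ := (B i).le_opNorm _
    _ ≤ N * η := mul_le_mul (hB i) h2 (norm_nonneg _) hN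

theorem exists_dual {m t : ℕ} (g : Fin t → EuclideanSpace ℝ (Fin m)) :
    ∃ (J : Finset (Fin t)) (N : ℕ) (B : Fin t → (EuclideanSpace ℝ (Fin m) →L[ℝ] ℝ)),
      J.card = (Matrix.of fun (i : Fin m) (j : Fin t) => g j i).rank ∧ (∀ i, ‖B i‖ ≤ N) ∧
      ∀ i ∈ J, ∀ j ∈ J, B i (g j) = if i = j then 1 else 0 := by
  classical
  obtain ⟨κ, a, ha, hspan, hli⟩ := exists_linearIndependent' ℝ g
  have : Finite κ := Finite.of_injective a ha
  have : Fintype κ := Fintype.ofFinite κ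
  have hr : Fintype.card κ = (Matrix.of fun (i : Fin m) (j : Fin t) => g j i).rank := by
    rw [Matrix.rank_eq_finrank_span_cols, ← finrank_span_eq_card hli, hspan]
    let e := (WithLp.linearEquiv 2 ℝ (Fin m → ℝ))
    rw [← LinearEquiv.finrank_map_eq e, Submodule.map_span, ← Set.range_comp]
    rfl
  obtain ⟨l, hl⟩ := LinearMap.exists_leftInverse_of_injective _
    (LinearMap.ker_eq_bot.2 hli)
  have hl' : ∀ k, l (g (a k)) = Finsupp.single k 1 := by
    intro k
    have := LinearMap.congr_fun hl (Finsupp.single k 1)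
    simpa using this
  let B : Fin t → (EuclideanSpace ℝ (Fin m) →L[ℝ] ℝ) := fun i =>
    if h : ∃ k, a k = i then LinearMap.toContinuousLinearMap ((Finsupp.lapply h.choose).comp l)
    else 0
  obtain ⟨N, hN⟩ := exists_nat_ge (∑ i, ‖B i‖)
  refine ⟨Finset.univ.image a, N, B, ?_, ?_, ?_⟩
  · rw [Finset.card_image_of_injective _ ha, ← hr]; rfl
  · intro i
    exact (Finset.single_le_sum (f := fun i => ‖B i‖) (fun i _ => norm_nonneg _)
      (Finset.mem_univ i)).trans hN
  · intro i hi j hj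
    simp only [Finset.mem_image, Finset.mem_univ, true_and] at hi hj
    obtain ⟨k, rfl⟩ := hj
    have hc := hi.choose_spec
    simp only [B, dif_pos hi]
    simp only [LinearMap.coe_toContinuousLinearMap', LinearMap.comp_apply, hl',
      Finsupp.lapply_apply, Finsupp.single_apply]
    by_cases hh : i = a k
    · have : k = hi.choose := ha (by rw [hc, hh])
      rw [if_pos this, if_pos hh]
    · have : k ≠ hi.choose := fun h => hh (by rw [← hc, ← h])
      rw [if_neg this, if_neg hh]

theorem bad_null {p m t : ℕ} (T : Set (EuclideanSpace ℝ (Fin p)))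
    (G0 : EuclideanSpace ℝ (Fin p) → EuclideanSpace ℝ (Fin m))
    (Gs : Fin t → EuclideanSpace ℝ (Fin p) → EuclideanSpace ℝ (Fin m))
    (L0 : NNReal) (hG0 : LipschitzOnWith L0 G0 T)
    (L : Fin t → NNReal) (hGs : ∀ i : Fin t, LipschitzOnWith (L i) (Gs i) T)
    (r N ρ : ℕ) (k : ℝ) (hk : k < r) (hd : DimLE p T k)
    (hT : ∀ z ∈ T, ∃ (J : Finset (Fin t)) (B : Fin t → (EuclideanSpace ℝ (Fin m) →L[ℝ] ℝ)),
      J.card = r ∧ (∀ i, ‖B i‖ ≤ N) ∧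
      ∀ i ∈ J, ∀ j ∈ J, B i (Gs j z) = if i = j then 1 else 0) :
    volume {α : Fin t → ℝ | (∀ i, |α i| ≤ ρ) ∧ ∃ z ∈ T, G0 z + ∑ i, α i • Gs i z = 0} = 0 := by
  set M : ℝ := (L0 + ∑ i, (ρ : ℝ) * L i) * 2 with hM
  have hM0 : 0 ≤ M := by positivity
  set K : ℝ := (2 * (N * M)) ^ r * (2 * (ρ : ℝ)) ^ (t - r) with hK
  have hK0 : 0 ≤ K := by positivity
  obtain ⟨ε₀, hε₀, hcov⟩ := hd ((r - k) / 2) (by linarith)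
  have key : ∀ ε ∈ Set.Ioo (0 : ℝ) ε₀,
      volume {α : Fin t → ℝ | (∀ i, |α i| ≤ ρ) ∧ ∃ z ∈ T, G0 z + ∑ i, α i • Gs i z = 0} ≤
      ENNReal.ofReal (K * ε ^ ((r - k) / 2)) := by
    intro ε hε
    obtain ⟨C, hC, hTC⟩ := hcov ε hε
    have hε0 : 0 < ε := hε.1
    have hsub : {α : Fin t → ℝ | (∀ i, |α i| ≤ ρ) ∧ ∃ z ∈ T, G0 z + ∑ i, α i • Gs i z = 0} ⊆
        ⋃ c ∈ C, {α : Fin t → ℝ | (∀ i, |α i| ≤ ρ) ∧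
          ∃ z ∈ T, z ∈ Metric.closedBall c ε ∧ G0 z + ∑ i, α i • Gs i z = 0} := by
      rintro α ⟨h1, z, hz, h2⟩
      have := hTC hz
      simp only [Set.mem_iUnion] at this ⊢
      obtain ⟨c, hc, hzc⟩ := this
      exact ⟨c, hc, h1, z, hz, hzc, h2⟩
    have hone : ∀ c ∈ C, volume {α : Fin t → ℝ | (∀ i, |α i| ≤ ρ) ∧
          ∃ z ∈ T, z ∈ Metric.closedBall c ε ∧ G0 z + ∑ i, α i • Gs i z = 0} ≤
          ENNReal.ofReal (K * ε ^ r) := by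
      intro c _
      by_cases hne : ∃ z0 ∈ T, z0 ∈ Metric.closedBall c ε
      · obtain ⟨z0, hz0, hz0c⟩ := hne
        obtain ⟨J, B, hJ, hB, hBg⟩ := hT z0 hz0
        have h := affine_volume J N (Nat.cast_nonneg N) (G0 z0) (fun i => Gs i z0) B hB hBg ρ
          (M * ε)
        refine (measure_mono ?_).trans (h.trans (le_of_eq ?_))
        · rintro α ⟨h1, z, hz, hzc, h2⟩
          refine ⟨h1, ?_⟩
          have hdist : dist z0 z ≤ 2 * ε := by
            have := dist_triangle_right z0 z c
            simp only [Metric.mem_closedBall] at hzc hz0c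
            linarith
          have e : G0 z0 + ∑ i, α i • Gs i z0 =
              (G0 z0 - G0 z) + ∑ i, α i • (Gs i z0 - Gs i z) := by
            rw [← sub_zero (G0 z0 + ∑ i, α i • Gs i z0), ← h2]
            simp only [smul_sub, Finset.sum_sub_distrib]
            abel
          rw [e]
          calc _ ≤ ‖G0 z0 - G0 z‖ + ∑ i, ‖α i • (Gs i z0 - Gs i z)‖ :=
                (norm_add_le _ _).trans (by gcongr; exact norm_sum_le _ _)
            _ ≤ L0 * (2 * ε) + ∑ i, (ρ : ℝ) * (L i * (2 * ε)) := by
                gcongr with i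
                · rw [← dist_eq_norm]
                  exact (hG0.dist_le_mul _ hz0 _ hz).trans (by gcongr)
                · rw [norm_smul, ← dist_eq_norm]
                  have := ((hGs i).dist_le_mul _ hz0 _ hz)
                  have h3 : ‖α i‖ ≤ ρ := h1 i
                  refine mul_le_mul h3 (this.trans (by gcongr)) dist_nonneg (by positivity)
            _ = M * ε := by
                rw [hM]
                simp only [← mul_assoc]
                rw [← Finset.sum_mul, ← Finset.sum_mul]
                ring
        · rw [hJ, ← ENNReal.ofReal_pow (by positivity), ← ENNReal.ofReal_pow (by positivity),
            ← ENNReal.ofReal_mul (by positivity)]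
          congr 1
          rw [hK]; ring
      · have : {α : Fin t → ℝ | (∀ i, |α i| ≤ ρ) ∧
          ∃ z ∈ T, z ∈ Metric.closedBall c ε ∧ G0 z + ∑ i, α i • Gs i z = 0} = ∅ := by
          ext α
          simp only [Set.mem_ofPred_eq, Set.mem_empty_iff_false, iff_false]
          rintro ⟨_, z, hz, hzc, _⟩
          exact hne ⟨z, hz, hzc⟩
        rw [this]; simp
    calc _ ≤ _ := measure_mono hsub
      _ ≤ ∑ c ∈ C, _ := measure_biUnion_finset_le _ _
      _ ≤ ∑ c ∈ C, ENNReal.ofReal (K * ε ^ r) := Finset.sum_le_sum hone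
      _ = ENNReal.ofReal (C.card * (K * ε ^ r)) := by
          rw [Finset.sum_const, ENNReal.ofReal_mul (p := (C.card : ℝ)) (by positivity), ENNReal.ofReal_natCast,
            nsmul_eq_mul]
      _ ≤ ENNReal.ofReal (K * ε ^ ((r - k) / 2)) := by
          apply ENNReal.ofReal_le_ofReal
          calc (C.card : ℝ) * (K * ε ^ r) ≤ ε ^ (-(k + (r - k) / 2)) * (K * ε ^ r) := by gcongr
            _ = K * (ε ^ (-(k + (r - k) / 2)) * ε ^ (r : ℝ)) := by
                rw [Real.rpow_natCast]; ring
            _ = _ := by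
                rw [← Real.rpow_add hε0]
                congr 2
                ring
  have hlim : Filter.Tendsto (fun ε : ℝ => ENNReal.ofReal (K * ε ^ ((r - k) / 2)))
      (nhdsWithin 0 (Set.Ioi 0)) (nhds 0) := by
    have h1 : Filter.Tendsto (fun ε : ℝ => K * ε ^ ((r - k) / 2)) (nhds 0) (nhds 0) := by
      have hc : ContinuousAt (fun ε : ℝ => K * ε ^ ((r - k) / 2)) 0 :=
        continuousAt_const.mul (Real.continuousAt_rpow_const _ _ (Or.inr (by linarith)))
      have h0 : K * (0 : ℝ) ^ ((r - k) / 2) = 0 := by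
        rw [Real.zero_rpow (by linarith), mul_zero]
      have := hc.tendsto
      rwa [h0] at this
    have := (ENNReal.tendsto_ofReal h1).mono_left (nhdsWithin_le_nhds (s := Set.Ioi 0))
    rwa [ENNReal.ofReal_zero] at this
  refine le_antisymm (ge_of_tendsto hlim ?_) zero_le
  filter_upwards [Ioo_mem_nhdsGT hε₀.1] with ε hε using key ε hε

/-- Sauer et al.: if `S` is bounded, `G₀, G₁, …, G_t` are Lipschitz on `S`,
and for every `r` the set `S_r = {z ∈ S : rank Φ_z = r}` is empty or has upper box-counting
dimension at most some `k_r < r`, then for almost every `α ∈ ℝ^t` there is no `z ∈ S` with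
`G₀(z) + Φ_z α = 0`. -/
theorem stmt11 (p m t : ℕ) (S : Set (EuclideanSpace ℝ (Fin p)))
    (hS : Bornology.IsBounded S)
    (G0 : EuclideanSpace ℝ (Fin p) → EuclideanSpace ℝ (Fin m))
    (Gs : Fin t → EuclideanSpace ℝ (Fin p) → EuclideanSpace ℝ (Fin m))
    (hG0 : ∃ L : NNReal, LipschitzOnWith L G0 S)
    (hGs : ∀ i : Fin t, ∃ L : NNReal, LipschitzOnWith L (Gs i) S)
    (hdim : ∀ r : ℕ,
      {z ∈ S | (Matrix.of fun (i : Fin m) (j : Fin t) => Gs j z i).rank = r} = ∅ ∨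
      ∃ kr : ℝ, kr < r ∧
        DimLE p {z ∈ S | (Matrix.of fun (i : Fin m) (j : Fin t) => Gs j z i).rank = r} kr) :
    ∀ᵐ α ∂(volume : Measure (Fin t → ℝ)),
      ∀ z ∈ S, G0 z + ∑ i : Fin t, α i • Gs i z ≠ 0 := by
  choose L0 hL0 using hG0
  choose L hL using hGs
  let T : ℕ → ℕ → Set (EuclideanSpace ℝ (Fin p)) := fun r N =>
    {z | z ∈ {z ∈ S | (Matrix.of fun (i : Fin m) (j : Fin t) => Gs j z i).rank = r} ∧
      ∃ (J : Finset (Fin t)) (B : Fin t → (EuclideanSpace ℝ (Fin m) →L[ℝ] ℝ)),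
      J.card = r ∧ (∀ i, ‖B i‖ ≤ N) ∧
      ∀ i ∈ J, ∀ j ∈ J, B i (Gs j z) = if i = j then 1 else 0}
  have hnull : ∀ r N ρ : ℕ, volume {α : Fin t → ℝ | (∀ i, |α i| ≤ ρ) ∧
      ∃ z ∈ T r N, G0 z + ∑ i, α i • Gs i z = 0} = 0 := by
    intro r N ρ
    rcases hdim r with he | ⟨k, hk, hd⟩
    · have : {α : Fin t → ℝ | (∀ i, |α i| ≤ ρ) ∧
          ∃ z ∈ T r N, G0 z + ∑ i, α i • Gs i z = 0} = ∅ := by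
        ext α
        simp only [Set.mem_ofPred_eq, Set.mem_empty_iff_false, iff_false]
        rintro ⟨_, z, hz, _⟩
        have := hz.1
        rw [he] at this
        exact this
      rw [this]; simp
    · have hTS : T r N ⊆ S := fun z hz => hz.1.1
      refine bad_null (T r N) G0 Gs L0 (hL0.mono hTS) L (fun i => (hL i).mono hTS) r N ρ k hk ?_
        (fun z hz => hz.2)
      intro δ hδ
      obtain ⟨ε₀, hε₀, h⟩ := hd δ hδ
      refine ⟨ε₀, hε₀, fun ε hε => ?_⟩
      obtain ⟨C, hC, hsub⟩ := h ε hε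
      exact ⟨C, hC, fun z hz => hsub hz.1⟩
  have hall : ∀ᵐ α ∂(volume : Measure (Fin t → ℝ)), ∀ r N ρ : ℕ,
      ¬ ((∀ i, |α i| ≤ (ρ : ℝ)) ∧ ∃ z ∈ T r N, G0 z + ∑ i, α i • Gs i z = 0) := by
    rw [ae_all_iff]; intro r
    rw [ae_all_iff]; intro N
    rw [ae_all_iff]; intro ρ
    rw [ae_iff]
    simpa only [not_not] using hnull r N ρ
  filter_upwards [hall] with α hα z hz h0
  obtain ⟨J, N, B, hJ, hB, hBg⟩ := exists_dual (fun i => Gs i z)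
  obtain ⟨ρ, hρ⟩ := exists_nat_ge (∑ i, |α i|)
  refine hα _ N ρ ⟨fun i => ?_, z, ⟨⟨hz, rfl⟩, J, B, hJ, hB, hBg⟩, h0⟩
  exact (Finset.single_le_sum (f := fun i => |α i|) (fun i _ => abs_nonneg _)
      (Finset.mem_univ i)).trans hρ
end

section
/- Let n, G be positive integers, let m₁, …, m_G be positive integers with m₁ + ⋯ + m_G < n, and let A_g be a real m_g×n matrix for each g ∈ {1,…,G}. Then there exists a nonzero u ∈ ℝ^n with A_g u = 0 for every g, and consequently, for every nonempty bounded set X ⊆ ℝ^n, the inferred set of the family {A_1, …, A_G} strictly contains X: the condition Σ_{g=1}^G m_g ≥ n is necessary for model identification when the operators have different numbers of measurements. -/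
open Matrix

/-- if `m₁ + ⋯ + m_G < n`, there is a nonzero `u` in the common nullspace of
the operators `A_g ∈ ℝ^{m_g × n}`; consequently the inferred set strictly contains every
nonempty bounded `X`: `∑ m_g ≥ n` is necessary for model identification. -/
theorem stmt13 (n G : ℕ) (hn : 0 < n) (hG : 0 < G)
    (msz : Fin G → ℕ) (hmsz : ∀ g, 0 < msz g) (hsum : ∑ g, msz g < n)
    (A : (g : Fin G) → Matrix (Fin (msz g)) (Fin n) ℝ) :
    ∃ u : Fin n → ℝ, u ≠ 0 ∧ (∀ g : Fin G, A g *ᵥ u = 0) ∧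
      ∀ X : Set (Fin n → ℝ), X.Nonempty → Bornology.IsBounded X →
        X ⊂ {v | ∀ g : Fin G, ∃ x ∈ X, A g *ᵥ v = A g *ᵥ x} := by
  obtain ⟨u, hu0, hu⟩ : ∃ u : Fin n → ℝ, u ≠ 0 ∧ ∀ g : Fin G, A g *ᵥ u = 0 := by
    let L : (Fin n → ℝ) →ₗ[ℝ] ((g : Fin G) → Fin (msz g) → ℝ) :=
      LinearMap.pi (fun g => (A g).mulVecLin)
    have hL : LinearMap.ker L ≠ ⊥ := by
      apply LinearMap.ker_ne_bot_of_finrank_lt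
      rw [Module.finrank_pi_fintype]
      simpa using hsum
    obtain ⟨u, hu, hu0⟩ := (Submodule.ne_bot_iff _).1 hL
    refine ⟨u, hu0, fun g => ?_⟩
    exact congrFun (LinearMap.mem_ker.1 hu) g
  refine ⟨u, hu0, hu, fun X hX hb => ⟨fun x hx g => ⟨x, hx, rfl⟩, fun hsub => ?_⟩⟩
  obtain ⟨x, hx⟩ := hX
  obtain ⟨C, hC⟩ := hb.exists_norm_le
  have hpos : 0 < ‖u‖ := norm_pos_iff.2 hu0
  have hC0 : 0 ≤ C := (norm_nonneg x).trans (hC x hx)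
  set t : ℝ := (C + ‖x‖ + 1) / ‖u‖ with ht
  have hmem : x + t • u ∈ X := hsub (fun g => ⟨x, hx, by
    rw [Matrix.mulVec_add, Matrix.mulVec_smul, hu g, smul_zero, add_zero]⟩)
  have h1 := hC _ hmem
  have h2 : ‖t • u‖ = C + ‖x‖ + 1 := by
    have ht0 : 0 ≤ t := by positivity
    rw [norm_smul, Real.norm_of_nonneg ht0, ht, div_mul_cancel₀ _ hpos.ne']
  have h3 : ‖t • u‖ ≤ ‖x + t • u‖ + ‖x‖ := by
    simpa using norm_sub_le (x + t • u) x
  linarith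
end
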